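/- Let F be a Ferrers diagram of semiperimeter n+1. For c ∈ Rec_min(G(F)) with CanonTop(c) = (U^0, V^1, U^1, V^2, …), let ζ(c) be the word obtained by concatenating the blocks V^1, U^1, V^2, U^2, … (omitting U^0 = {0}), listing each V-block in increasing order and each U-block in decreasing order. Then ζ(c) is a permutation of {1,…,n}, and the map c ↦ ζ(c) is a bijection from Rec_min(G(F)) onto the set of permutations of {1,…,n} whose set of descent bottoms is exactly rows(F) \ {0}. -/

import Mathlib

open Classical

/-- A Ferrers diagram of semiperimeter `n + 1`, encoded by the set of its row labels
(labels `0, …, n` run along the south-east border; `0` labels the top row and the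
last label `n` is a column label). -/
structure Ferrers (n : ℕ) where
  rows : Finset (Fin (n + 1))
  zero_mem : 0 ∈ rows
  last_not_mem : Fin.last n ∉ rows

namespace Ferrers

/-- `(i, j)` is a cell of the diagram: `i` is a row label, `j` a column label, `i < j`. -/
def Cell {n : ℕ} (F : Ferrers n) (i j : Fin (n + 1)) : Prop :=
  i ∈ F.rows ∧ j ∉ F.rows ∧ i < j

/-- Adjacency in the Ferrers graph `G(F)`. -/
def Adj {n : ℕ} (F : Ferrers n) (u v : Fin (n + 1)) : Prop :=
  F.Cell u v ∨ F.Cell v u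

/-- Degree of a vertex in `G(F)`. -/
noncomputable def deg {n : ℕ} (F : Ferrers n) (v : Fin (n + 1)) : ℕ :=
  {u | F.Adj v u}.ncard

/-- Toppling a single vertex.  The height at the sink `0` is kept equal to `c 0`
(grains sent to the sink vanish); toppling the sink sends one grain to each of
its neighbours. -/
noncomputable def topple {n : ℕ} (F : Ferrers n) (c : Fin (n + 1) → ℕ)
    (v : Fin (n + 1)) : Fin (n + 1) → ℕ :=
  fun u =>
    if u = 0 then c 0
    else if u = v then c v - F.deg v
    else if F.Adj v u then c u + 1
    else c u

/-- Toppling the vertices of a list in order. -/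
noncomputable def toppleList {n : ℕ} (F : Ferrers n) (c : Fin (n + 1) → ℕ)
    (l : List (Fin (n + 1))) : Fin (n + 1) → ℕ :=
  l.foldl F.topple c

/-- Simultaneous toppling of a set of vertices. -/
noncomputable def toppleSet {n : ℕ} (F : Ferrers n) (c : Fin (n + 1) → ℕ)
    (S : Set (Fin (n + 1))) : Fin (n + 1) → ℕ :=
  fun u =>
    if u = 0 then c 0
    else c u + {w ∈ S | F.Adj w u}.ncard - if u ∈ S then F.deg u else 0

/-- A configuration is stable if every non-sink vertex has fewer grains than its degree. -/
def Stable {n : ℕ} (F : Ferrers n) (c : Fin (n + 1) → ℕ) : Prop :=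
  ∀ v, v ≠ 0 → c v < F.deg v

/-- A Dhar (burning) ordering for `c`: an ordering `v₀ = 0, v₁, …, vₙ` of all the
vertices such that each `vᵢ` (`i ≥ 1`) is unstable after toppling `v₀, …, v_{i-1}`. -/
def DharSeq {n : ℕ} (F : Ferrers n) (c : Fin (n + 1) → ℕ) (l : List (Fin (n + 1))) : Prop :=
  l.length = n + 1 ∧ l.Nodup ∧ l.head? = some 0 ∧
    ∀ i, ∀ h : i < l.length, 1 ≤ i →
      F.deg (l.get ⟨i, h⟩) ≤ F.toppleList c (l.take i) (l.get ⟨i, h⟩)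

/-- Recurrent configurations (via Dhar's criterion).  The height at the sink is
normalised to `0`. -/
def Recurrent {n : ℕ} (F : Ferrers n) (c : Fin (n + 1) → ℕ) : Prop :=
  c 0 = 0 ∧ F.Stable c ∧ ∃ l, F.DharSeq c l

/-- Minimal recurrent configurations: recurrent with minimal total number of grains. -/
def RecMin {n : ℕ} (F : Ferrers n) (c : Fin (n + 1) → ℕ) : Prop :=
  F.Recurrent c ∧ ∀ c', F.Recurrent c' → (∑ v, c v) ≤ ∑ v, c' v

/-- Canonical toppling: block `0` is `{0}` (the sink); from then on, blocks with odd
index are the sets of currently unstable column vertices and blocks with even index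
the sets of currently unstable row vertices.  The first component is the configuration
just before toppling the block recorded in the second component. -/
noncomputable def canonAux {n : ℕ} (F : Ferrers n) (c : Fin (n + 1) → ℕ) :
    ℕ → ((Fin (n + 1) → ℕ) × Set (Fin (n + 1)))
  | 0 => (c, {0})
  | k + 1 =>
    let c' := F.toppleSet (canonAux F c k).1 (canonAux F c k).2
    (c', {v | v ≠ 0 ∧ (if k % 2 = 0 then v ∉ F.rows else v ∈ F.rows) ∧ F.deg v ≤ c' v})

/-- The `k`-th block of the canonical toppling of `c`:
`canonTop F c 0 = U⁰ = {0}`, `canonTop F c (2i-1) = Vⁱ`, `canonTop F c (2i) = Uⁱ`. -/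
noncomputable def canonTop {n : ℕ} (F : Ferrers n) (c : Fin (n + 1) → ℕ) (k : ℕ) :
    Set (Fin (n + 1)) :=
  (F.canonAux c k).2

/-- The configuration just before toppling the `k`-th block of the canonical toppling. -/
noncomputable def canonConfig {n : ℕ} (F : Ferrers n) (c : Fin (n + 1) → ℕ) (k : ℕ) :
    Fin (n + 1) → ℕ :=
  (F.canonAux c k).1

/-- The index of the block of the canonical toppling of `c` containing `v`. -/
noncomputable def bIdx {n : ℕ} (F : Ferrers n) (c : Fin (n + 1) → ℕ) (v : Fin (n + 1)) : ℕ :=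
  sInf {k | v ∈ F.canonTop c k}

/-- `T` is a EW-tableau on `F` (entries of non-cells are normalised to `false`):
the top row contains only `1`s, every other row contains a `0`, and there is no
rectangle with two diagonally opposite `0`s and two `1`s in the other corners. -/
def IsEW {n : ℕ} (F : Ferrers n) (T : Fin (n + 1) → Fin (n + 1) → Bool) : Prop :=
  (∀ i j, ¬F.Cell i j → T i j = false) ∧
  (∀ j, F.Cell 0 j → T 0 j = true) ∧
  (∀ i, i ∈ F.rows → i ≠ 0 → ∃ j, F.Cell i j ∧ T i j = false) ∧
  (∀ i i' j j', F.Cell i j → F.Cell i j' → F.Cell i' j → F.Cell i' j' →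
    T i j = T i' j' → T i j' = T i' j → T i j = T i j')

/-- The configuration associated to a tableau: row vertices count the `1`s in their
row, column vertices count the `0`s in their column (the sink is normalised to `0`). -/
noncomputable def phiTC {n : ℕ} (F : Ferrers n) (T : Fin (n + 1) → Fin (n + 1) → Bool) :
    Fin (n + 1) → ℕ :=
  fun v =>
    if v = 0 then 0
    else if v ∈ F.rows then {j | F.Cell v j ∧ T v j = true}.ncard
    else {i | F.Cell i v ∧ T i v = false}.ncard

/-- The tableau associated to a (minimal recurrent) configuration: a cell `(i, j)`
gets a `1` exactly when `i` lies in an earlier block than `j` in the canonical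
toppling of `c`. -/
noncomputable def phiCT {n : ℕ} (F : Ferrers n) (c : Fin (n + 1) → ℕ) :
    Fin (n + 1) → Fin (n + 1) → Bool :=
  fun i j => if F.Cell i j ∧ F.bIdx c i < F.bIdx c j then true else false

/-- The supplementary tableau of `T`: `S i j = 1` exactly when the row vertex `i`
lies in an earlier block than the column vertex `j` in `CanonTop (φ_TC T)`. -/
noncomputable def suppS {n : ℕ} (F : Ferrers n) (T : Fin (n + 1) → Fin (n + 1) → Bool)
    (i j : Fin (n + 1)) : Bool :=
  if F.bIdx (F.phiTC T) i < F.bIdx (F.phiTC T) j then true else false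

/-- The entry of `T` in cell `(j, k)` is a cornersupport entry. -/
def Cornersupport {n : ℕ} (F : Ferrers n) (T : Fin (n + 1) → Fin (n + 1) → Bool)
    (j k : Fin (n + 1)) : Prop :=
  ∃ j' k', j' ∈ F.rows ∧ k' ∉ F.rows ∧ j' ≠ j ∧ k' ≠ k ∧
    F.suppS T j' k' = !(T j k) ∧ F.suppS T j' k = T j k ∧ F.suppS T j k' = T j k

/-- `ν_v(T)`: the number of non-cornersupport `0`s in row `v` (if `v` is a row label),
resp. non-cornersupport `1`s in column `v` (if `v` is a column label). -/
noncomputable def nu {n : ℕ} (F : Ferrers n) (T : Fin (n + 1) → Fin (n + 1) → Bool)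
    (v : Fin (n + 1)) : ℕ :=
  if v ∈ F.rows then {k | F.Cell v k ∧ T v k = false ∧ ¬F.Cornersupport T v k}.ncard
  else {i | F.Cell i v ∧ T i v = true ∧ ¬F.Cornersupport T i v}.ncard

/-- `μ_v(c)`: if `v ∈ Uⁱ`, the number of `k ∈ Vⁱ` with `k > v`; if `v ∈ Vⁱ`,
the number of `k ∈ U^{i-1}` with `k < v`.  In both cases the relevant block is the
one immediately preceding the block of `v`. -/
noncomputable def mu {n : ℕ} (F : Ferrers n) (c : Fin (n + 1) → ℕ) (v : Fin (n + 1)) : ℕ :=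
  if v ∈ F.rows then {k | v < k ∧ k ∈ F.canonTop c (F.bIdx c v - 1)}.ncard
  else {k | k < v ∧ k ∈ F.canonTop c (F.bIdx c v - 1)}.ncard

/-- The minimal recurrent configuration with the same canonical toppling as `c`:
if `j ∈ Uⁱ` then `minrec c j = |{ℓ ∈ Vᵏ : j < ℓ, k > i}|`, and if `j ∈ Vⁱ` then
`minrec c j = |{ℓ ∈ Uᵏ : ℓ < j, k ≥ i}|` (blocks `Vᵏ` sit at odd index `2k - 1`,
blocks `Uᵏ` at even index `2k`). -/
noncomputable def minrecFun {n : ℕ} (F : Ferrers n) (c : Fin (n + 1) → ℕ) :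
    Fin (n + 1) → ℕ :=
  fun j =>
    if j = 0 then 0
    else if j ∈ F.rows then
      {l | j < l ∧ ∃ k, F.bIdx c j < 2 * k + 1 ∧ l ∈ F.canonTop c (2 * k + 1)}.ncard
    else
      {l | l < j ∧ ∃ k, F.bIdx c j < 2 * k ∧ l ∈ F.canonTop c (2 * k)}.ncard

/-- The number of edges of `G(F)` (equivalently, the number of cells of `F`). -/
noncomputable def edgeCount {n : ℕ} (F : Ferrers n) : ℕ :=
  {p : Fin (n + 1) × Fin (n + 1) | F.Cell p.1 p.2}.ncard

end Ferrers

namespace Ferrers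

/-- The `k`-th block of the canonical toppling of `c` listed as a word: increasing
for the (odd-indexed) column blocks `Vⁱ`, decreasing for the (even-indexed) row
blocks `Uⁱ`. -/
noncomputable def blockWord {n : ℕ} (F : Ferrers n) (c : Fin (n + 1) → ℕ) (k : ℕ) :
    List (Fin (n + 1)) :=
  let s := (Set.toFinite (F.canonTop c k)).toFinset.sort (· ≤ ·)
  if k % 2 = 1 then s else s.reverse

/-- The permutation `ζ c`: the concatenation
`inc(V¹) dec(U¹) inc(V²) dec(U²) ⋯` (the initial block `U⁰ = {0}` is omitted). -/
noncomputable def zeta {n : ℕ} (F : Ferrers n) (c : Fin (n + 1) → ℕ) :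
    List (Fin (n + 1)) :=
  (((List.range (2 * n + 2)).drop 1).map (F.blockWord c)).flatten

end Ferrers

/-- The set of descent bottoms of a word: letters immediately preceded by a
greater letter. -/
def descentBottoms {α : Type*} [LT α] (l : List α) : Set α :=
  {v | ∃ i, ∃ h : i + 1 < l.length,
    l.get ⟨i + 1, h⟩ = v ∧ l.get ⟨i + 1, h⟩ < l.get ⟨i, Nat.lt_of_succ_lt h⟩}

/-!
Directing the edges of `G(F)` along a Dhar ordering shows that a configuration passes the burning
test exactly when it dominates the out-degree configuration of an acyclic orientation in which the
sink is a source. All these out-degree configurations have the same total, the number of edges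
minus the degree of the sink, so the minimal recurrent configurations are the stable ones among
them.

For a recurrent `c`, the block index of the canonical toppling is a layering `b`: the sink is alone
in layer `0`, columns lie in odd and rows in even layers, and every other vertex has a neighbour
one layer below. Orienting the edges towards the higher layer recovers a minimal `c` from `b`, and
every layering is the block index of its own out-degree configuration. So it remains to
match layerings with words.

In the word `0 ζ(c)`, the layer grows by one exactly when the letters pass from rows to columns or
back, and stays the same otherwise; hence the word determines `b`. Within a layer the columns
increase and the rows decrease. At the first letter `v` of a layer, following the letter `u`, the
existence of a neighbour in the layer below amounts to `u` itself being a neighbour of `v`, that is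
to `u < v` if `v` is a column and `v < u` if `v` is a row. Together these conditions say that the
descent bottoms are exactly the rows.
-/

section Chains

variable {α : Type*}

theorem isChain_and_iff {R S : α → α → Prop} {l : List α} :
    l.IsChain (fun u v => R u v ∧ S u v) ↔ l.IsChain R ∧ l.IsChain S := by
  simp only [List.isChain_iff_getElem, forall_and]

theorem mem_of_nodup_of_length_eq_card [Fintype α] {l : List α} (hnd : l.Nodup)
    (hlen : l.length = Fintype.card α) (v : α) : v ∈ l := by
  have huniv : l.toFinset = Finset.univ :=
    Finset.eq_univ_of_card _ ((List.toFinset_card_of_nodup hnd).trans hlen)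
  exact List.mem_toFinset.1 (huniv ▸ Finset.mem_univ v)

theorem isChain_covering_of_pairwise {R : α → α → Prop} [IsStrictOrder α R] {l : List α}
    (h : l.Pairwise R) :
    l.IsChain fun u v => R u v ∧ ∀ w ∈ l, R w v → w = u ∨ R w u := by
  rw [List.pairwise_iff_getElem] at h
  refine List.isChain_iff_getElem.2 fun i hi => ⟨h i (i + 1) _ hi (Nat.lt_succ_self i), ?_⟩
  intro w hw hwv
  obtain ⟨j, hj, rfl⟩ := List.getElem_of_mem hw
  rcases lt_trichotomy j i with hji | rfl | hij
  · exact Or.inr (h j i hj _ hji)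
  · exact Or.inl rfl
  · rcases (Nat.succ_le_of_lt hij).eq_or_lt with rfl | hij
    · exact absurd hwv (irrefl_of R _)
    · exact absurd hwv (asymm_of R (h (i + 1) j hi hj hij))

theorem exists_isChain_eq_add {β : Type*} [Add β] (d : α → α → β) (k : β) {a : α} {l : List α}
    (hnd : (a :: l).Nodup) :
    ∃ b : α → β, b a = k ∧ (a :: l).IsChain fun u v => b v = b u + d u v := by
  induction l generalizing a k with
  | nil => exact ⟨fun _ => k, rfl, List.isChain_singleton a⟩
  | cons x l ih =>
    obtain ⟨ha, hnd⟩ := List.nodup_cons.1 hnd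
    obtain ⟨b, hx, hb⟩ := ih (k + d a x) hnd
    have hupdate : ∀ v ∈ x :: l, Function.update b a k v = b v := fun v hv =>
      Function.update_of_ne (by rintro rfl; exact ha hv) _ _
    refine ⟨Function.update b a k, Function.update_self a k b, List.isChain_cons_cons.2 ⟨?_, ?_⟩⟩
    · rw [Function.update_self, hupdate x List.mem_cons_self, hx]
    · refine hb.imp_of_mem_imp fun u v hu hv h => ?_
      rw [hupdate u hu, hupdate v hv, h]

theorem eq_of_isChain_eq_add {β : Type*} [Add β] {d : α → α → β} {b b' : α → β} {a : α}
    {l : List α} (hb : (a :: l).IsChain fun u v => b v = b u + d u v)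
    (hb' : (a :: l).IsChain fun u v => b' v = b' u + d u v) (ha : b a = b' a) :
    ∀ v ∈ a :: l, b v = b' v := by
  refine List.forall_mem_cons.2 ⟨ha, (isChain_and_iff.2 ⟨hb, hb'⟩).cons_induction _ _ ?_ ha⟩
  rintro u v ⟨hv, hv'⟩ hu
  rw [hv, hv', hu]

theorem getElem_succ_mem_descentBottoms_iff [LT α] {l : List α} (hnd : l.Nodup) {i : ℕ}
    (hi : i + 1 < l.length) : l[i + 1] ∈ descentBottoms l ↔ l[i + 1] < l[i] := by
  refine ⟨?_, fun hlt => ⟨i, hi, rfl, hlt⟩⟩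
  rintro ⟨j, hj, heq, hlt⟩
  obtain rfl : j = i := Nat.succ_injective (hnd.getElem_inj_iff.1 heq)
  exact hlt

theorem descentBottoms_cons [LT α] {a : α} {l : List α} (ha : ∀ v ∈ l, ¬ v < a) :
    descentBottoms (a :: l) = descentBottoms l := by
  ext v
  constructor
  · rintro ⟨_ | i, hi, rfl, hlt⟩
    · exact absurd hlt (ha _ (List.getElem_mem _))
    · exact ⟨i, Nat.lt_of_succ_lt_succ hi, rfl, hlt⟩
  · rintro ⟨i, hi, rfl, hlt⟩
    exact ⟨i + 1, Nat.succ_lt_succ hi, rfl, hlt⟩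

theorem mem_tail_iff_exists_getElem_succ {l : List α} {v : α} :
    v ∈ l.tail ↔ ∃ i, ∃ hi : i + 1 < l.length, l[i + 1] = v := by
  cases l with
  | nil => simp
  | cons a l => simp [List.mem_iff_getElem]

theorem descentBottoms_eq_iff_isChain [LinearOrder α] {p : α → Prop} [DecidablePred p]
    {l : List α} (hnd : l.Nodup) :
    descentBottoms l = {v | p v ∧ v ∈ l.tail} ↔
      l.IsChain fun u v => if p v then v < u else u < v := by
  have hsub : ∀ v ∈ descentBottoms l, v ∈ l.tail := fun v ⟨i, hi, hv, _⟩ =>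
    mem_tail_iff_exists_getElem_succ.2 ⟨i, hi, hv⟩
  have hrestrict : descentBottoms l = {v | p v ∧ v ∈ l.tail} ↔
      ∀ v ∈ l.tail, (v ∈ descentBottoms l ↔ p v) := by
    rw [Set.ext_iff]
    exact forall_congr' fun v => by have := hsub v; rw [Set.mem_ofPred_eq]; tauto
  rw [hrestrict, List.isChain_iff_getElem]
  simp only [mem_tail_iff_exists_getElem_succ]
  constructor
  · intro h i hi
    have hp := h _ ⟨i, hi, rfl⟩
    rw [getElem_succ_mem_descentBottoms_iff hnd] at hp
    split_ifs with hpi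
    · exact hp.2 hpi
    · refine lt_of_le_of_ne (not_lt.1 (mt hp.1 hpi)) fun h => ?_
      exact (Nat.lt_succ_self i).ne (hnd.getElem_inj_iff.1 h)
  · rintro h _ ⟨i, hi, rfl⟩
    have hlt := h i hi
    rw [getElem_succ_mem_descentBottoms_iff hnd]
    split_ifs at hlt with hpi
    · exact iff_of_true hlt hpi
    · exact iff_of_false hlt.asymm hpi

end Chains

section RankOrientation

variable {V β : Type*} [LinearOrder β] (G : SimpleGraph V) (r : V → β)

/-- The in-degree of `v` when every edge of `G` is directed towards its end of larger rank `r`. -/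
noncomputable def inDegree (v : V) : ℕ := {w | r w < r v ∧ G.Adj w v}.ncard

/-- The out-degree of `v` when every edge of `G` is directed towards its end of larger rank `r`. -/
noncomputable def outDegree (v : V) : ℕ := {w | r v < r w ∧ G.Adj w v}.ncard

variable {G r}

theorem inDegree_add_outDegree [Finite V] (hr : ∀ ⦃u v⦄, G.Adj u v → r u ≠ r v) (v : V) :
    inDegree G r v + outDegree G r v = (G.neighborSet v).ncard := by
  have hdisj : Disjoint {w | r w < r v ∧ G.Adj w v} {w | r v < r w ∧ G.Adj w v} :=
    Set.disjoint_left.2 fun _ h h' => h.1.asymm h'.1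
  rw [inDegree, outDegree, ← Set.ncard_union_eq hdisj]
  congr 1
  ext w
  simp only [Set.mem_union, Set.mem_ofPred_eq, ← or_and_right, SimpleGraph.mem_neighborSet,
    G.adj_comm v w]
  exact and_iff_right_of_imp fun h => lt_or_gt_of_ne (hr h)

theorem sum_outDegree_eq_sum_inDegree [Fintype V] :
    ∑ v, outDegree G r v = ∑ v, inDegree G r v := by
  have h := Finset.sum_card_bipartiteAbove_eq_sum_card_bipartiteBelow
    (fun v w => r v < r w ∧ G.Adj w v) (s := Finset.univ) (t := Finset.univ)
  simpa only [outDegree, inDegree, Set.ncard_eq_toFinset_card', Set.toFinset_ofPred,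
    Finset.bipartiteAbove, Finset.bipartiteBelow, G.adj_comm] using h

theorem sum_outDegree [Fintype V] (hr : ∀ ⦃u v⦄, G.Adj u v → r u ≠ r v) :
    ∑ v, outDegree G r v = G.edgeFinset.card := by
  have hdeg : ∀ v, inDegree G r v + outDegree G r v = G.degree v := fun v => by
    rw [inDegree_add_outDegree hr, Set.ncard_eq_toFinset_card', SimpleGraph.degree,
      SimpleGraph.neighborFinset]
  have htwice : ∑ v, inDegree G r v + ∑ v, outDegree G r v = 2 * G.edgeFinset.card := by
    rw [← Finset.sum_add_distrib, ← G.sum_degrees_eq_twice_card_edges]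
    exact Finset.sum_congr rfl fun v _ => hdeg v
  rw [← sum_outDegree_eq_sum_inDegree] at htwice
  omega

end RankOrientation

namespace Ferrers

variable {n : ℕ} {F : Ferrers n}

theorem Adj.symm {u v : Fin (n + 1)} (h : F.Adj u v) : F.Adj v u := Or.symm h

theorem Adj.mem_rows_iff {u v : Fin (n + 1)} (h : F.Adj u v) : u ∈ F.rows ↔ v ∉ F.rows := by
  rcases h with ⟨hu, hv, -⟩ | ⟨hv, hu, -⟩ <;> tauto

/-- The Ferrers graph `G(F)` as a `SimpleGraph`. -/
def graph (F : Ferrers n) : SimpleGraph (Fin (n + 1)) where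
  Adj := F.Adj
  symm := ⟨fun _ _ => Adj.symm⟩
  loopless := ⟨fun _ h => by have := h.mem_rows_iff; tauto⟩

section Rank

variable {β : Type*} [LinearOrder β]

/-- A rank function on `G(F)`: it takes distinct values on neighbours, and its minimum only at
the sink. Directing every edge towards its end of larger rank gives an acyclic orientation of
`G(F)` in which the sink is a source. -/
structure IsRank (F : Ferrers n) (r : Fin (n + 1) → β) : Prop where
  zero_lt : ∀ v, v ≠ 0 → r 0 < r v
  ne_of_adj : ∀ ⦃u v⦄, F.Adj u v → r u ≠ r v

/-- The configuration of a rank function: a non-sink vertex holds one grain for every neighbour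
of larger rank. -/
noncomputable def rankConfig (F : Ferrers n) (r : Fin (n + 1) → β) : Fin (n + 1) → ℕ :=
  fun v => if v = 0 then 0 else outDegree F.graph r v

variable {r : Fin (n + 1) → β}

@[simp]
theorem rankConfig_zero (F : Ferrers n) (r : Fin (n + 1) → β) : F.rankConfig r 0 = 0 :=
  if_pos rfl

theorem rankConfig_of_ne {v : Fin (n + 1)} (hv : v ≠ 0) :
    F.rankConfig r v = outDegree F.graph r v :=
  if_neg hv

theorem IsRank.inDegree_add_outDegree (hr : F.IsRank r) (v : Fin (n + 1)) :
    inDegree F.graph r v + outDegree F.graph r v = F.deg v :=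
  _root_.inDegree_add_outDegree hr.ne_of_adj v

theorem IsRank.rankConfig_le_iff (hr : F.IsRank r) {v : Fin (n + 1)} (hv : v ≠ 0) {k : ℕ} :
    F.rankConfig r v ≤ k ↔ F.deg v ≤ k + inDegree F.graph r v := by
  rw [rankConfig_of_ne hv, ← hr.inDegree_add_outDegree v]
  omega

theorem IsRank.sum_rankConfig (hr : F.IsRank r) :
    ∑ v, F.rankConfig r v + F.deg 0 = F.graph.edgeFinset.card := by
  have hsource : inDegree F.graph r 0 = 0 := by
    rw [inDegree, Set.ncard_eq_zero, Set.eq_empty_iff_forall_notMem]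
    rintro w ⟨hw, hadj⟩
    exact hw.asymm (hr.zero_lt w hadj.ne)
  rw [← sum_outDegree hr.ne_of_adj, Fin.sum_univ_succ, Fin.sum_univ_succ, rankConfig_zero,
    ← hr.inDegree_add_outDegree 0, hsource, zero_add, zero_add, add_comm]
  simp only [rankConfig_of_ne (Fin.succ_ne_zero _)]

end Rank

section Dhar

variable {c : Fin (n + 1) → ℕ} {l : List (Fin (n + 1))}

theorem toppleList_apply {v : Fin (n + 1)} (hv : v ≠ 0) (c : Fin (n + 1) → ℕ)
    (hnd : l.Nodup) (hvl : v ∉ l) :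
    F.toppleList c l v = c v + {w | w ∈ l ∧ F.Adj w v}.ncard := by
  induction l generalizing c with
  | nil => simp [toppleList]
  | cons a l ih =>
    obtain ⟨hal, hnd⟩ := List.nodup_cons.1 hnd
    obtain ⟨hva, hvl⟩ := not_or.1 (mt List.mem_cons.2 hvl)
    rw [toppleList, List.foldl_cons, ← toppleList, ih _ hnd hvl]
    by_cases ha : F.Adj a v
    · have hset : {w | w ∈ a :: l ∧ F.Adj w v} = insert a {w | w ∈ l ∧ F.Adj w v} := by
        ext w
        simp only [List.mem_cons, Set.mem_ofPred_eq, Set.mem_insert_iff]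
        grind
      rw [hset, Set.ncard_insert_of_notMem (fun h => hal h.1)]
      simp only [topple, hv, hva, ha, if_true, if_false]
      omega
    · have hset : {w | w ∈ a :: l ∧ F.Adj w v} = {w | w ∈ l ∧ F.Adj w v} := by
        ext w
        simp only [List.mem_cons, Set.mem_ofPred_eq]
        grind
      rw [hset]
      simp only [topple, hv, hva, ha, if_false]

theorem toppleList_take_idxOf (hnd : l.Nodup) (hmem : ∀ v, v ∈ l) {v : Fin (n + 1)}
    (hv : v ≠ 0) :
    F.toppleList c (l.take (l.idxOf v)) v = c v + inDegree F.graph (l.idxOf ·) v := by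
  have htake : ∀ w, w ∈ l.take (l.idxOf v) ↔ l.idxOf w < l.idxOf v := fun w =>
    List.mem_take_iff_idxOf_lt (hmem w)
  rw [toppleList_apply hv c (hnd.sublist (List.take_sublist _ _)) (by simp [htake])]
  simp only [htake]
  rfl

theorem isRank_idxOf (hhead : l.head? = some 0) (hmem : ∀ v, v ∈ l) :
    F.IsRank (l.idxOf ·) := by
  have hinj : ∀ {u v}, l.idxOf u = l.idxOf v → u = v := (List.idxOf_inj (hmem _)).1
  have hzero : l.idxOf 0 = 0 := by
    obtain ⟨t, rfl⟩ := List.head?_eq_some_iff.1 hhead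
    exact List.idxOf_cons_self
  refine ⟨fun v hv => ?_, fun u v huv h => F.graph.ne_of_adj huv (hinj h)⟩
  simp only [hzero]
  exact Nat.pos_of_ne_zero fun h => hv (hinj (h.trans hzero.symm))

theorem dharSeq_iff : F.DharSeq c l ↔
    l.length = n + 1 ∧ l.Nodup ∧ l.head? = some 0 ∧
      ∀ v, F.rankConfig (l.idxOf ·) v ≤ c v := by
  refine and_congr_right fun hlen => and_congr_right fun hnd => and_congr_right fun hhead => ?_
  have hmem := mem_of_nodup_of_length_eq_card hnd (hlen.trans (Fintype.card_fin _).symm)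
  have hrank : F.IsRank (l.idxOf ·) := isRank_idxOf hhead hmem
  have hunstable : ∀ v, v ≠ 0 → (F.deg v ≤ F.toppleList c (l.take (l.idxOf v)) v ↔
      F.rankConfig (l.idxOf ·) v ≤ c v) := fun v hv => by
    rw [toppleList_take_idxOf hnd hmem hv, hrank.rankConfig_le_iff hv]
  constructor
  · intro h v
    by_cases hv : v = 0
    · simp [hv]
    have hlt := List.idxOf_lt_length_of_mem (hmem v)
    have := h _ hlt (Nat.one_le_of_lt (hrank.zero_lt v hv))
    rw [List.idxOf_get hlt] at this
    exact (hunstable v hv).1 this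
  · intro h i hi hpos
    have hidx : l.idxOf (l.get ⟨i, hi⟩) = i := hnd.idxOf_getElem i hi
    have hne : l.get ⟨i, hi⟩ ≠ 0 := fun h0 => by
      obtain ⟨t, rfl⟩ := List.head?_eq_some_iff.1 hhead
      rw [h0, List.idxOf_cons_self] at hidx
      omega
    have := (hunstable _ hne).2 (h _)
    rwa [hidx] at this

end Dhar

theorem IsRank.exists_dharSeq {β : Type*} [LinearOrder β] {r : Fin (n + 1) → β}
    {c : Fin (n + 1) → ℕ} (hr : F.IsRank r) (hc : ∀ v, F.rankConfig r v ≤ c v) :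
    ∃ l, F.DharSeq c l := by
  let σ := Tuple.sort r
  have hσ : ∀ {i j}, r (σ i) < r (σ j) → i < j := (Tuple.monotone_sort r).reflect_lt
  have hnd : (List.ofFn σ).Nodup := List.nodup_ofFn.2 σ.injective
  have hidx : ∀ v, (List.ofFn σ).idxOf v = σ.symm v := fun v => by
    have := hnd.idxOf_getElem (σ.symm v) (by rw [List.length_ofFn]; exact (σ.symm v).isLt)
    simpa only [List.getElem_ofFn, Fin.eta, Equiv.apply_symm_apply] using this
  have hlt : ∀ {u v}, r u < r v → (List.ofFn σ).idxOf u < (List.ofFn σ).idxOf v :=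
    fun {u v} h => by
      rw [hidx, hidx]
      exact hσ (by simpa using h)
  have hhead : σ 0 = 0 := by
    by_contra hne
    have := hσ (i := σ.symm 0) (j := 0) (by simpa using hr.zero_lt _ hne)
    exact Fin.not_lt_zero _ this
  have hconfig : F.rankConfig ((List.ofFn σ).idxOf ·) = F.rankConfig r := by
    funext v
    simp only [rankConfig, outDegree]
    congr 3
    ext w
    refine and_congr_left fun hadj => ⟨fun h => ?_, hlt⟩
    exact (lt_or_gt_of_ne (hr.ne_of_adj hadj.symm)).resolve_right fun h' => h.asymm (hlt h')
  refine ⟨List.ofFn σ, dharSeq_iff.2 ⟨List.length_ofFn, hnd, ?_, fun v => ?_⟩⟩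
  · rw [List.ofFn_succ, List.head?_cons, hhead]
  · rw [hconfig]
    exact hc v

theorem recurrent_iff {c : Fin (n + 1) → ℕ} :
    F.Recurrent c ↔ c 0 = 0 ∧ F.Stable c ∧
      ∃ r : Fin (n + 1) → ℕ, F.IsRank r ∧ ∀ v, F.rankConfig r v ≤ c v := by
  refine and_congr_right fun _ => and_congr_right fun _ => ⟨?_, ?_⟩
  · rintro ⟨l, hl⟩
    obtain ⟨hlen, hnd, hhead, hle⟩ := dharSeq_iff.1 hl
    have hmem := mem_of_nodup_of_length_eq_card hnd (hlen.trans (Fintype.card_fin _).symm)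
    exact ⟨_, isRank_idxOf hhead hmem, hle⟩
  · rintro ⟨r, hr, hle⟩
    exact hr.exists_dharSeq hle

section MinimalRecurrent

variable {β : Type*} [LinearOrder β] {r : Fin (n + 1) → β} {c : Fin (n + 1) → ℕ}

theorem IsRank.recurrent_rankConfig (hr : F.IsRank r)
    (hs : F.Stable (F.rankConfig r)) : F.Recurrent (F.rankConfig r) :=
  ⟨rankConfig_zero F r, hs, hr.exists_dharSeq fun _ => le_rfl⟩

theorem IsRank.recMin_rankConfig (hr : F.IsRank r)
    (hs : F.Stable (F.rankConfig r)) : F.RecMin (F.rankConfig r) := by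
  refine ⟨hr.recurrent_rankConfig hs, fun c' hc' => ?_⟩
  obtain ⟨-, -, r', hr', hle⟩ := recurrent_iff.1 hc'
  calc ∑ v, F.rankConfig r v
      = ∑ v, F.rankConfig r' v :=
        Nat.add_right_cancel (hr.sum_rankConfig.trans hr'.sum_rankConfig.symm)
    _ ≤ ∑ v, c' v := Finset.sum_le_sum fun v _ => hle v

theorem RecMin.eq_rankConfig (hc : F.RecMin c) (hr : F.IsRank r)
    (hle : ∀ v, F.rankConfig r v ≤ c v) : c = F.rankConfig r := by
  have hs : F.Stable (F.rankConfig r) := fun v hv => (hle v).trans_lt (hc.1.2.1 v hv)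
  have hsum : ∑ v, F.rankConfig r v = ∑ v, c v :=
    le_antisymm (Finset.sum_le_sum fun v _ => hle v) (hc.2 _ (hr.recurrent_rankConfig hs))
  funext v
  exact ((Finset.sum_eq_sum_iff_of_le fun v _ => hle v).1 hsum v (Finset.mem_univ v)).symm

end MinimalRecurrent

section CanonicalToppling

variable {c : Fin (n + 1) → ℕ} {k : ℕ} {v : Fin (n + 1)}

/-- The vertices toppled strictly before block `k` of the canonical toppling. -/
def toppledBefore (F : Ferrers n) (c : Fin (n + 1) → ℕ) (k : ℕ) : Set (Fin (n + 1)) :=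
  ⋃ j < k, F.canonTop c j

/-- Conservation of grains during the canonical toppling: the height of `u` just before block `k`
is its initial height, plus one grain per neighbour toppled so far, minus `deg u` if `u` has itself
been toppled. The last term is moved to the left to avoid truncated subtraction. -/
def GrainBalance (F : Ferrers n) (c : Fin (n + 1) → ℕ) (k : ℕ) : Prop :=
  ∀ u, u ≠ 0 → F.canonConfig c k u + (if u ∈ F.toppledBefore c k then F.deg u else 0)
    = c u + {w | w ∈ F.toppledBefore c k ∧ F.Adj w u}.ncard

theorem toppledBefore_succ (c : Fin (n + 1) → ℕ) (k : ℕ) :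
    F.toppledBefore c (k + 1) = F.toppledBefore c k ∪ F.canonTop c k :=
  Set.biUnion_lt_succ _ _

theorem canonTop_zero (c : Fin (n + 1) → ℕ) : F.canonTop c 0 = {0} := rfl

theorem mem_canonTop_succ : v ∈ F.canonTop c (k + 1) ↔
    v ≠ 0 ∧ (v ∈ F.rows ↔ k % 2 ≠ 0) ∧ F.deg v ≤ F.canonConfig c (k + 1) v := by
  change (v ≠ 0 ∧ (if k % 2 = 0 then v ∉ F.rows else v ∈ F.rows) ∧
    F.deg v ≤ F.canonConfig c (k + 1) v) ↔ _
  by_cases hk : k % 2 = 0 <;> simp [hk]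

theorem deg_le_canonConfig (hv : v ≠ 0) (h : v ∈ F.canonTop c k) :
    F.deg v ≤ F.canonConfig c k v := by
  cases k with
  | zero => exact absurd h hv
  | succ k => exact (mem_canonTop_succ.1 h).2.2

theorem canonConfig_succ_add (hv : v ≠ 0) :
    F.canonConfig c (k + 1) v + (if v ∈ F.canonTop c k then F.deg v else 0)
      = F.canonConfig c k v + {w | w ∈ F.canonTop c k ∧ F.Adj w v}.ncard := by
  have hstep : F.canonConfig c (k + 1) v = F.canonConfig c k v
      + {w | w ∈ F.canonTop c k ∧ F.Adj w v}.ncard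
      - if v ∈ F.canonTop c k then F.deg v else 0 := if_neg hv
  rw [hstep]
  split_ifs with h
  · have := deg_le_canonConfig hv h
    omega
  · omega

theorem GrainBalance.succ (hbal : F.GrainBalance c k)
    (hdisj : Disjoint (F.toppledBefore c k) (F.canonTop c k)) : F.GrainBalance c (k + 1) := by
  intro u hu
  have hcard : {w | w ∈ F.toppledBefore c (k + 1) ∧ F.Adj w u}.ncard
      = {w | w ∈ F.toppledBefore c k ∧ F.Adj w u}.ncard
        + {w | w ∈ F.canonTop c k ∧ F.Adj w u}.ncard := by
    rw [← Set.ncard_union_eq (hdisj.mono (fun _ h => h.1) fun _ h => h.1)]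
    congr 1
    ext w
    simp only [toppledBefore_succ, Set.mem_union, Set.mem_ofPred_eq, or_and_right]
  have hdeg : (if u ∈ F.toppledBefore c (k + 1) then F.deg u else 0)
      = (if u ∈ F.toppledBefore c k then F.deg u else 0)
        + if u ∈ F.canonTop c k then F.deg u else 0 := by
    have hnot : u ∈ F.toppledBefore c k → u ∉ F.canonTop c k :=
      fun h => Set.disjoint_left.1 hdisj h
    rw [toppledBefore_succ]
    by_cases h : u ∈ F.canonTop c k <;> simp_all
  have hstep := canonConfig_succ_add (F := F) (c := c) (k := k) hu
  have := hbal u hu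
  omega

theorem GrainBalance.disjoint (hs : F.Stable c) (hbal : F.GrainBalance c (k + 1)) :
    Disjoint (F.toppledBefore c (k + 1)) (F.canonTop c (k + 1)) := by
  refine Set.disjoint_left.2 fun v hbefore hnow => ?_
  obtain ⟨hv, -, hunstable⟩ := mem_canonTop_succ.1 hnow
  have hgrains := hbal v hv
  rw [if_pos hbefore] at hgrains
  have hreceived : {w | w ∈ F.toppledBefore c (k + 1) ∧ F.Adj w v}.ncard ≤ F.deg v :=
    Set.ncard_le_ncard fun _ hw => hw.2.symm
  have := hs v hv
  omega

theorem Stable.grainBalance_and_disjoint (hs : F.Stable c) (k : ℕ) :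
    F.GrainBalance c k ∧ Disjoint (F.toppledBefore c k) (F.canonTop c k) := by
  induction k with
  | zero => simp [GrainBalance, toppledBefore, canonConfig, canonAux]
  | succ k ih =>
    have hbal := ih.1.succ ih.2
    exact ⟨hbal, hbal.disjoint hs⟩

theorem Stable.mem_canonTop_succ_iff (hs : F.Stable c) : v ∈ F.canonTop c (k + 1) ↔
    v ≠ 0 ∧ (v ∈ F.rows ↔ k % 2 ≠ 0) ∧ v ∉ F.toppledBefore c (k + 1) ∧
      F.deg v ≤ c v + {w | w ∈ F.toppledBefore c (k + 1) ∧ F.Adj w v}.ncard := by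
  obtain ⟨hbal, hdisj⟩ := hs.grainBalance_and_disjoint (k + 1)
  have hnot : v ∈ F.canonTop c (k + 1) → v ∉ F.toppledBefore c (k + 1) :=
    fun h h' => Set.disjoint_left.1 hdisj h' h
  rw [← and_iff_right_of_imp hnot, mem_canonTop_succ]
  have hgrains : v ≠ 0 → v ∉ F.toppledBefore c (k + 1) → F.canonConfig c (k + 1) v
      = c v + {w | w ∈ F.toppledBefore c (k + 1) ∧ F.Adj w v}.ncard := fun hv h => by
    have := hbal v hv
    rwa [if_neg h] at this
  grind

theorem Stable.pairwise_disjoint_canonTop (hs : F.Stable c) {i j : ℕ}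
    (hi : v ∈ F.canonTop c i) (hj : v ∈ F.canonTop c j) : i = j := by
  have hle : ∀ {i j}, v ∈ F.canonTop c i → v ∈ F.canonTop c j → j ≤ i := fun {i j} hi hj =>
    not_lt.1 fun h => Set.disjoint_left.1 (hs.grainBalance_and_disjoint j).2
      (Set.mem_biUnion h hi) hj
  exact le_antisymm (hle hj hi) (hle hi hj)

theorem Recurrent.exists_mem_canonTop (hc : F.Recurrent c) (v : Fin (n + 1)) :
    ∃ k, v ∈ F.canonTop c k := by
  obtain ⟨-, hs, r, hr, hle⟩ := recurrent_iff.1 hc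
  induction hm : r v using Nat.strong_induction_on generalizing v with
  | _ m ih =>
    subst hm
    by_cases hv : v = 0
    · exact ⟨0, hv⟩
    by_contra hnever
    let K := Finset.univ.sup (F.bIdx c)
    obtain ⟨k, hk, hpar⟩ : ∃ k, K ≤ k ∧ (v ∈ F.rows ↔ k % 2 ≠ 0) := by
      by_cases hrow : v ∈ F.rows
      · exact ⟨2 * K + 1, by omega, by simp only [hrow, true_iff]; omega⟩
      · exact ⟨2 * K, by omega, by simp only [hrow, false_iff]; omega⟩
    have hearlier : ∀ w, r w < r v → w ∈ F.toppledBefore c (k + 1) := fun w hw =>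
      Set.mem_biUnion (Nat.lt_succ_of_le ((Finset.le_sup (Finset.mem_univ w)).trans hk))
        (Nat.sInf_mem (ih _ hw w rfl))
    have hreceived : inDegree F.graph r v
        ≤ {w | w ∈ F.toppledBefore c (k + 1) ∧ F.Adj w v}.ncard :=
      Set.ncard_le_ncard fun w hw => ⟨hearlier w hw.1, hw.2⟩
    have hunstable := ((hr.rankConfig_le_iff hv).1 (hle v)).trans
      (Nat.add_le_add_left hreceived _)
    refine hnever ⟨k + 1, hs.mem_canonTop_succ_iff.2 ⟨hv, hpar, fun h => ?_, hunstable⟩⟩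
    obtain ⟨j, -, hj⟩ := Set.mem_iUnion₂.1 h
    exact hnever ⟨j, hj⟩

theorem Recurrent.mem_canonTop_iff (hc : F.Recurrent c) :
    v ∈ F.canonTop c k ↔ F.bIdx c v = k := by
  have hmem : v ∈ F.canonTop c (F.bIdx c v) := Nat.sInf_mem (hc.exists_mem_canonTop v)
  exact ⟨hc.2.1.pairwise_disjoint_canonTop hmem, fun h => h ▸ hmem⟩

theorem Recurrent.mem_toppledBefore_iff (hc : F.Recurrent c) :
    v ∈ F.toppledBefore c k ↔ F.bIdx c v < k := by
  simp [toppledBefore, hc.mem_canonTop_iff]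

end CanonicalToppling

section Layering

/-- A layering of `G(F)`: the sink forms layer `0`, columns lie in odd layers and rows in even
layers, and every other vertex has a neighbour in the preceding layer. These are the block
indices of the canonical topplings. -/
structure IsLayering (F : Ferrers n) (b : Fin (n + 1) → ℕ) : Prop where
  eq_zero_iff : ∀ v, b v = 0 ↔ v = 0
  even_iff : ∀ v, b v % 2 = 0 ↔ v ∈ F.rows
  exists_adj : ∀ v, v ≠ 0 → ∃ w, F.Adj w v ∧ b w + 1 = b v

variable {b c : Fin (n + 1) → ℕ}

theorem IsLayering.isRank (hb : F.IsLayering b) : F.IsRank b where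
  zero_lt v hv := by
    rw [(hb.eq_zero_iff 0).2 rfl]
    exact Nat.pos_of_ne_zero (mt (hb.eq_zero_iff v).1 hv)
  ne_of_adj u v huv heq := by
    have := huv.mem_rows_iff
    rw [← hb.even_iff, ← hb.even_iff, heq] at this
    tauto

theorem Recurrent.bIdx_eq_zero_iff (hc : F.Recurrent c) (v : Fin (n + 1)) :
    F.bIdx c v = 0 ↔ v = 0 := by
  rw [← hc.mem_canonTop_iff, canonTop_zero, Set.mem_singleton_iff]

theorem Recurrent.bIdx_even_iff (hc : F.Recurrent c) (v : Fin (n + 1)) :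
    F.bIdx c v % 2 = 0 ↔ v ∈ F.rows := by
  have hmem := hc.mem_canonTop_iff.2 (rfl : F.bIdx c v = F.bIdx c v)
  cases hk : F.bIdx c v with
  | zero => simp [(hc.bIdx_eq_zero_iff v).1 hk, F.zero_mem]
  | succ k =>
    rw [hk] at hmem
    rw [(mem_canonTop_succ.1 hmem).2.1]
    omega

theorem Recurrent.mem_canonTop_succ_iff (hc : F.Recurrent c) {k : ℕ} {v : Fin (n + 1)} :
    v ∈ F.canonTop c (k + 1) ↔ v ≠ 0 ∧ (v ∈ F.rows ↔ k % 2 ≠ 0) ∧ k < F.bIdx c v ∧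
      F.deg v ≤ c v + {w | F.bIdx c w ≤ k ∧ F.Adj w v}.ncard := by
  simp only [hc.2.1.mem_canonTop_succ_iff, hc.mem_toppledBefore_iff, Nat.lt_succ_iff, not_le]

theorem Recurrent.deg_le_add_inDegree (hc : F.Recurrent c) {v : Fin (n + 1)} (hv : v ≠ 0) :
    F.deg v ≤ c v + inDegree F.graph (F.bIdx c) v := by
  obtain ⟨k, hk⟩ := Nat.exists_eq_succ_of_ne_zero (mt (hc.bIdx_eq_zero_iff v).1 hv)
  have := (hc.mem_canonTop_succ_iff.1 (hc.mem_canonTop_iff.2 hk)).2.2.2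
  simp only [inDegree, hk, Nat.lt_succ_iff]
  exact this

-- The neighbours of `v` lie in blocks of the opposite parity, so those before the preceding block
-- are toppled early enough to have made `v` topple two blocks sooner, had they sufficed.
theorem Recurrent.add_ncard_lt_deg (hc : F.Recurrent c) {v : Fin (n + 1)} (hv : v ≠ 0) :
    c v + {w | F.bIdx c w + 1 < F.bIdx c v ∧ F.Adj w v}.ncard < F.deg v := by
  have hgap : ∀ w, F.Adj w v → F.bIdx c w + 1 < F.bIdx c v → F.bIdx c w + 3 ≤ F.bIdx c v := by
    intro w hadj hlt
    have := hadj.mem_rows_iff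
    rw [← hc.bIdx_even_iff, ← hc.bIdx_even_iff] at this
    omega
  rcases Nat.lt_or_ge (F.bIdx c v) 3 with hsmall | hlarge
  · have hempty : {w | F.bIdx c w + 1 < F.bIdx c v ∧ F.Adj w v} = ∅ :=
      Set.eq_empty_iff_forall_notMem.2 fun w hw => by
        have := hgap w hw.2 hw.1
        omega
    rw [hempty, Set.ncard_empty]
    exact hc.2.1 v hv
  obtain ⟨k, hk⟩ := Nat.exists_eq_add_of_le' hlarge
  have hnot : v ∉ F.canonTop c (k + 1) := fun h => by
    rw [hc.mem_canonTop_iff] at h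
    omega
  have hpar : v ∈ F.rows ↔ k % 2 ≠ 0 := by
    rw [← hc.bIdx_even_iff]
    omega
  have hstable : c v + {w | F.bIdx c w ≤ k ∧ F.Adj w v}.ncard < F.deg v :=
    not_le.1 fun h => hnot (hc.mem_canonTop_succ_iff.2 ⟨hv, hpar, by omega, h⟩)
  have hle : {w | F.bIdx c w + 1 < F.bIdx c v ∧ F.Adj w v}.ncard
      ≤ {w | F.bIdx c w ≤ k ∧ F.Adj w v}.ncard :=
    Set.ncard_le_ncard fun w hw => ⟨by have := hgap w hw.2 hw.1; omega, hw.2⟩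
  exact (Nat.add_le_add_left hle _).trans_lt hstable

theorem Recurrent.isLayering_bIdx (hc : F.Recurrent c) : F.IsLayering (F.bIdx c) where
  eq_zero_iff := hc.bIdx_eq_zero_iff
  even_iff := hc.bIdx_even_iff
  exists_adj v hv := by
    by_contra! hnone
    have hle : inDegree F.graph (F.bIdx c) v
        ≤ {w | F.bIdx c w + 1 < F.bIdx c v ∧ F.Adj w v}.ncard :=
      Set.ncard_le_ncard fun w hw => ⟨lt_of_le_of_ne hw.1 (hnone w hw.2), hw.2⟩
    have := hc.deg_le_add_inDegree hv
    have := hc.add_ncard_lt_deg hv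
    omega

theorem RecMin.eq_rankConfig_bIdx (hc : F.RecMin c) : c = F.rankConfig (F.bIdx c) := by
  have hrank := hc.1.isLayering_bIdx.isRank
  refine hc.eq_rankConfig hrank fun v => ?_
  by_cases hv : v = 0
  · simp [hv]
  · exact (hrank.rankConfig_le_iff hv).2 (hc.1.deg_le_add_inDegree hv)

theorem IsLayering.inDegree_pos (hb : F.IsLayering b) {v : Fin (n + 1)} (hv : v ≠ 0) :
    0 < inDegree F.graph b v := by
  obtain ⟨w, hadj, hw⟩ := hb.exists_adj v hv
  exact (Set.ncard_pos).2 ⟨w, hw.le, hadj⟩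

theorem IsLayering.stable (hb : F.IsLayering b) : F.Stable (F.rankConfig b) := by
  intro v hv
  rw [rankConfig_of_ne hv, ← hb.isRank.inDegree_add_outDegree v]
  exact Nat.lt_add_of_pos_left (hb.inDegree_pos hv)

theorem IsLayering.recMin_rankConfig (hb : F.IsLayering b) : F.RecMin (F.rankConfig b) :=
  hb.isRank.recMin_rankConfig hb.stable

theorem IsLayering.deg_le_rankConfig_add_iff (hb : F.IsLayering b) {v : Fin (n + 1)}
    (hv : v ≠ 0) {k : ℕ} :
    F.deg v ≤ F.rankConfig b v + {w | b w ≤ k ∧ F.Adj w v}.ncard ↔ b v ≤ k + 1 := by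
  have hdeg : F.deg v ≤ F.rankConfig b v + {w | b w ≤ k ∧ F.Adj w v}.ncard ↔
      inDegree F.graph b v ≤ {w | b w ≤ k ∧ F.Adj w v}.ncard := by
    rw [rankConfig_of_ne hv, ← hb.isRank.inDegree_add_outDegree v]
    omega
  rw [hdeg]
  constructor
  · obtain ⟨w, hadj, hw⟩ := hb.exists_adj v hv
    contrapose!
    intro hk
    exact Set.ncard_lt_ncard (Set.ssubset_iff_exists.2
      ⟨fun u hu => ⟨hu.1.trans_lt (by omega), hu.2⟩, w, ⟨hw.le, hadj⟩,
        fun h => by have := h.1; omega⟩)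
  · intro hk
    exact Set.ncard_le_ncard fun w hw => ⟨Nat.le_of_lt_succ (hw.1.trans_le hk), hw.2⟩

theorem IsLayering.mem_canonTop_rankConfig_iff (hb : F.IsLayering b) {k : ℕ} {v : Fin (n + 1)} :
    v ∈ F.canonTop (F.rankConfig b) k ↔ b v = k := by
  induction k using Nat.strong_induction_on generalizing v with
  | _ k ih =>
    cases k with
    | zero => rw [canonTop_zero, Set.mem_singleton_iff, hb.eq_zero_iff]
    | succ k =>
      have hbefore : ∀ w, w ∈ F.toppledBefore (F.rankConfig b) (k + 1) ↔ b w ≤ k := fun w => by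
        simp only [toppledBefore, Set.mem_iUnion₂, exists_prop]
        grind
      simp only [hb.stable.mem_canonTop_succ_iff, hbefore]
      constructor
      · rintro ⟨hv, -, hlt, hdeg⟩
        exact le_antisymm ((hb.deg_le_rankConfig_add_iff hv).1 hdeg) (not_le.1 hlt)
      · intro hk
        have hv : v ≠ 0 := mt (hb.eq_zero_iff v).2 (by omega)
        refine ⟨hv, ?_, by omega, (hb.deg_le_rankConfig_add_iff hv).2 hk.le⟩
        rw [← hb.even_iff]
        omega

theorem IsLayering.bIdx_rankConfig (hb : F.IsLayering b) : F.bIdx (F.rankConfig b) = b := by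
  funext v
  exact hb.recMin_rankConfig.1.mem_canonTop_iff.1 (hb.mem_canonTop_rankConfig_iff.2 rfl)

theorem IsLayering.le (hb : F.IsLayering b) (v : Fin (n + 1)) : b v ≤ n := by
  have hattained : ∀ k ≤ b v, k ∈ Finset.univ.image b := fun k hk => by
    refine Nat.decreasingInduction' (fun j _ _ hsucc => ?_) hk
      (Finset.mem_image_of_mem b (Finset.mem_univ v))
    obtain ⟨u, -, hu⟩ := Finset.mem_image.1 hsucc
    have hu0 : u ≠ 0 := mt (hb.eq_zero_iff u).2 (by omega)
    obtain ⟨w, -, hw⟩ := hb.exists_adj u hu0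
    exact Finset.mem_image.2 ⟨w, Finset.mem_univ w, by omega⟩
  have hsub : Finset.range (b v + 1) ⊆ Finset.univ.image b := fun k hk =>
    hattained k (Nat.lt_succ_iff.1 (Finset.mem_range.1 hk))
  have := (Finset.card_le_card hsub).trans Finset.card_image_le
  rw [Finset.card_range, Finset.card_univ, Fintype.card_fin] at this
  omega

end Layering

section LayerWord

/-- The order in which letters occur in the word of a layering `b`: layer by layer, odd layers
increasingly and even layers decreasingly. -/
def LayerLT {α : Type*} [LT α] (b : α → ℕ) (u v : α) : Prop :=
  b u < b v ∨ b u = b v ∧ if b u % 2 = 1 then u < v else v < u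

theorem LayerLT.le {α : Type*} [LT α] {b : α → ℕ} {u v : α} (h : LayerLT b u v) : b u ≤ b v :=
  h.elim le_of_lt fun h => h.1.le

instance LayerLT.isStrictOrder {α : Type*} [Preorder α] (b : α → ℕ) :
    IsStrictOrder α (LayerLT b) where
  irrefl u := by
    rintro (h | ⟨-, h⟩)
    · exact lt_irrefl _ h
    · split_ifs at h <;> exact lt_irrefl _ h
  trans u v w huv hvw := by
    rcases huv with huv | ⟨hb, huv⟩
    · exact Or.inl (huv.trans_le hvw.le)
    rcases hvw with hvw | ⟨hb', hvw⟩
    · exact Or.inl (hb ▸ hvw)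
    refine Or.inr ⟨hb.trans hb', ?_⟩
    rw [← hb] at hvw
    split_ifs at huv hvw ⊢
    · exact huv.trans hvw
    · exact hvw.trans huv

/-- `l` is the word of the layering `b`: it lists the non-sink vertices in the order `LayerLT b`. -/
structure IsLayerWord (b : Fin (n + 1) → ℕ) (l : List (Fin (n + 1))) : Prop where
  mem_iff : ∀ v, v ∈ l ↔ v ≠ 0
  pairwise : l.Pairwise (LayerLT b)

variable {b c : Fin (n + 1) → ℕ} {l l' : List (Fin (n + 1))}

theorem nodup_cons_zero (hnd : l.Nodup) (hmem : ∀ v, v ∈ l ↔ v ≠ 0) : (0 :: l).Nodup :=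
  List.nodup_cons.2 ⟨fun h => (hmem 0).1 h rfl, hnd⟩

theorem mem_cons_zero (hmem : ∀ v, v ∈ l ↔ v ≠ 0) (v : Fin (n + 1)) : v ∈ 0 :: l := by
  rw [List.mem_cons, hmem]
  exact eq_or_ne v 0

theorem IsLayerWord.nodup (hl : IsLayerWord b l) : l.Nodup :=
  hl.pairwise.imp (S := (· ≠ ·)) fun {_ _} h heq => irrefl_of (LayerLT b) _ (heq ▸ h)

theorem IsLayerWord.length_eq (hl : IsLayerWord b l) : l.length = n := by
  have hset : l.toFinset = Finset.univ.erase 0 := by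
    ext v
    simp [hl.mem_iff]
  rw [← List.toFinset_card_of_nodup hl.nodup, hset, Finset.card_erase_of_mem (Finset.mem_univ _),
    Finset.card_univ, Fintype.card_fin, Nat.add_sub_cancel]

theorem IsLayerWord.unique (hl : IsLayerWord b l) (hl' : IsLayerWord b l') : l = l' := by
  refine List.Perm.eq_of_pairwise (fun u v _ _ huv hvu => absurd hvu (asymm_of (LayerLT b) huv))
    hl.pairwise hl'.pairwise ?_
  exact (List.perm_ext_iff_of_nodup hl.nodup hl'.nodup).2 fun v =>
    (hl.mem_iff v).trans (hl'.mem_iff v).symm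

theorem mem_blockWord {k : ℕ} {v : Fin (n + 1)} : v ∈ F.blockWord c k ↔ v ∈ F.canonTop c k := by
  simp only [blockWord]
  split_ifs <;> simp

theorem pairwise_blockWord (F : Ferrers n) (c : Fin (n + 1) → ℕ) (k : ℕ) :
    (F.blockWord c k).Pairwise fun u v => if k % 2 = 1 then u < v else v < u := by
  have hsort := (Finset.sortedLT_sort (Set.toFinite (F.canonTop c k)).toFinset).pairwise
  simp only [blockWord]
  split_ifs
  · exact hsort
  · exact List.pairwise_reverse.2 hsort

theorem Recurrent.pairwise_zeta (hc : F.Recurrent c) :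
    (F.zeta c).Pairwise (LayerLT (F.bIdx c)) := by
  have hmem : ∀ {k v}, v ∈ F.blockWord c k → F.bIdx c v = k := fun {k v} hv =>
    hc.mem_canonTop_iff.1 (mem_blockWord.1 hv)
  rw [zeta, List.pairwise_flatten, List.forall_mem_map, List.pairwise_map]
  constructor
  · intro k _
    refine (pairwise_blockWord F c k).imp_of_mem fun {u v} hu hv h => Or.inr ?_
    rw [hmem hu, hmem hv]
    exact ⟨rfl, h⟩
  · refine (List.pairwise_lt_range.sublist (List.drop_sublist _ _)).imp
      fun {i j} hij u hu v hv => Or.inl ?_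
    rwa [hmem hu, hmem hv]

theorem Recurrent.mem_zeta_iff (hc : F.Recurrent c) (v : Fin (n + 1)) :
    v ∈ F.zeta c ↔ v ≠ 0 := by
  have hle := hc.isLayering_bIdx.le v
  have hrange : F.bIdx c v ∈ (List.range (2 * n + 2)).drop 1 ↔ F.bIdx c v ≠ 0 := by
    rw [List.range_eq_range', List.drop_range', List.mem_range'_1]
    omega
  rw [← (hc.bIdx_eq_zero_iff v).ne, ← hrange]
  simp only [zeta, List.mem_flatten, List.mem_map, exists_exists_and_eq_and, mem_blockWord,
    hc.mem_canonTop_iff, exists_eq_right']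

theorem Recurrent.isLayerWord_zeta (hc : F.Recurrent c) : IsLayerWord (F.bIdx c) (F.zeta c) :=
  ⟨hc.mem_zeta_iff, hc.pairwise_zeta⟩

/-- The number of layers by which a letter `v` exceeds the preceding letter `u` in the word of a
layering: a new layer starts when the letters pass from rows to columns or back. -/
noncomputable def layerGap (F : Ferrers n) (u v : Fin (n + 1)) : ℕ :=
  if u ∈ F.rows ↔ v ∈ F.rows then 0 else 1

/-- The condition on consecutive letters `u v` that makes `v` a descent bottom exactly when it is a
row. -/
def DescentStep (F : Ferrers n) (u v : Fin (n + 1)) : Prop :=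
  if v ∈ F.rows then v < u else u < v

theorem adj_iff_descentStep {u v : Fin (n + 1)} :
    F.Adj u v ↔ ¬ (u ∈ F.rows ↔ v ∈ F.rows) ∧ F.DescentStep u v := by
  unfold Adj Cell DescentStep
  split_ifs <;> tauto

theorem DescentStep.adj_of_adj {u v w : Fin (n + 1)} (h : F.DescentStep u v)
    (huv : u ∈ F.rows ↔ v ∈ F.rows) (huw : F.Adj u w) : F.Adj v w := by
  unfold DescentStep at h
  rcases huw with ⟨hu, hw, hlt⟩ | ⟨hw, hu, hlt⟩
  · rw [if_pos (huv.1 hu)] at h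
    exact Or.inl ⟨huv.1 hu, hw, h.trans hlt⟩
  · rw [if_neg (mt huv.2 hu)] at h
    exact Or.inr ⟨hw, mt huv.2 hu, hlt.trans h⟩

theorem descentBottoms_eq_rows_iff (hnd : l.Nodup) (hmem : ∀ v, v ∈ l ↔ v ≠ 0) :
    descentBottoms l = {v | v ∈ F.rows ∧ v ≠ 0} ↔ (0 :: l).IsChain F.DescentStep := by
  rw [← descentBottoms_cons fun v _ => Fin.not_lt_zero v]
  simp only [← hmem]
  exact descentBottoms_eq_iff_isChain (nodup_cons_zero hnd hmem)

theorem IsLayering.layerLT_iff_descentStep (hb : F.IsLayering b) {u v : Fin (n + 1)}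
    (huv : b u = b v) : LayerLT b u v ↔ F.DescentStep u v := by
  have hv : b v % 2 = 1 ↔ v ∉ F.rows := by
    rw [← hb.even_iff]
    omega
  simp only [LayerLT, DescentStep, huv, lt_irrefl, false_or, true_and, hv, ite_not]

-- When `v` opens a new layer, a neighbour `w` of `v` in the preceding layer precedes or equals `u`
-- within that layer, so that `u` is a neighbour of `v` as well.
theorem IsLayering.step_of_covering (hb : F.IsLayering b) {u v : Fin (n + 1)}
    (huv : LayerLT b u v) (hcov : ∀ w, LayerLT b w v → w = u ∨ LayerLT b w u) :
    b v = b u + F.layerGap u v ∧ F.DescentStep u v := by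
  have hrows : ∀ {x y}, b x = b y → (x ∈ F.rows ↔ y ∈ F.rows) := fun {x y} h => by
    rw [← hb.even_iff, h, hb.even_iff]
  rcases huv.le.eq_or_lt with heq | hlt
  · rw [layerGap, if_pos (hrows heq)]
    exact ⟨heq.symm, (hb.layerLT_iff_descentStep heq).1 huv⟩
  have hv : v ≠ 0 := mt (hb.eq_zero_iff v).2 (Nat.ne_zero_of_lt hlt)
  obtain ⟨w, hadj, hw⟩ := hb.exists_adj v hv
  have hwu := hcov w (Or.inl (by omega))
  have hlayer : b w = b u :=
    le_antisymm (hwu.elim (fun h => (congrArg b h).le) LayerLT.le) (by omega)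
  have hadj' : F.Adj u v := by
    rcases hwu with rfl | hwu
    · exact hadj
    · exact ((hb.layerLT_iff_descentStep hlayer).1 hwu).adj_of_adj (hrows hlayer) hadj
  obtain ⟨hdiff, hstep⟩ := adj_iff_descentStep.1 hadj'
  rw [layerGap, if_neg hdiff]
  exact ⟨by omega, hstep⟩

theorem IsLayering.isChain_of_isLayerWord (hb : F.IsLayering b) (hl : IsLayerWord b l) :
    ((0 :: l).IsChain fun u v => b v = b u + F.layerGap u v) ∧
      (0 :: l).IsChain F.DescentStep := by
  have hpw : (0 :: l).Pairwise (LayerLT b) :=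
    List.pairwise_cons.2 ⟨fun v hv => Or.inl (hb.isRank.zero_lt v ((hl.mem_iff v).1 hv)),
      hl.pairwise⟩
  exact isChain_and_iff.1 <| (isChain_covering_of_pairwise hpw).imp fun _ _ h =>
    hb.step_of_covering h.1 fun w => h.2 w (mem_cons_zero hl.mem_iff w)

theorem even_iff_of_isChain (hzero : b 0 = 0)
    (hgap : (0 :: l).IsChain fun u v => b v = b u + F.layerGap u v) :
    ∀ v ∈ 0 :: l, b v % 2 = 0 ↔ v ∈ F.rows := by
  have hstart : b 0 % 2 = 0 ↔ 0 ∈ F.rows := by simp [hzero, F.zero_mem]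
  refine List.forall_mem_cons.2 ⟨hstart, hgap.cons_induction _ _ (fun u v huv hu => ?_) hstart⟩
  rw [huv, layerGap]
  split_ifs with h
  · rw [← h, ← hu, Nat.add_zero]
  · rw [show v ∈ F.rows ↔ ¬ u ∈ F.rows by tauto, ← hu]
    omega

theorem exists_adj_of_isChain
    (hgap : (0 :: l).IsChain fun u v => b v = b u + F.layerGap u v)
    (hdesc : (0 :: l).IsChain F.DescentStep) :
    ∀ v ∈ l, v ≠ 0 → ∃ w, F.Adj w v ∧ b w + 1 = b v := by
  refine (isChain_and_iff.2 ⟨hgap, hdesc⟩).cons_induction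
    (fun v => v ≠ 0 → ∃ w, F.Adj w v ∧ b w + 1 = b v) l ?_ (absurd rfl)
  rintro u v ⟨hbv, huv⟩ hu -
  unfold layerGap at hbv
  split_ifs at hbv with hsame
  · have hu0 : u ≠ 0 := by
      rintro rfl
      rw [DescentStep, if_pos (hsame.1 F.zero_mem)] at huv
      exact Fin.not_lt_zero v huv
    obtain ⟨w, hadj, hw⟩ := hu hu0
    exact ⟨w, (huv.adj_of_adj hsame hadj.symm).symm, hw.trans hbv.symm⟩
  · exact ⟨u, adj_iff_descentStep.2 ⟨hsame, huv⟩, hbv.symm⟩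

theorem isLayering_of_isChain (hmem : ∀ v, v ∈ l ↔ v ≠ 0) (hzero : b 0 = 0)
    (hgap : (0 :: l).IsChain fun u v => b v = b u + F.layerGap u v)
    (hdesc : (0 :: l).IsChain F.DescentStep) : F.IsLayering b where
  eq_zero_iff v := by
    refine ⟨fun hv => by_contra fun hne => ?_, fun hv => hv ▸ hzero⟩
    obtain ⟨w, -, hw⟩ := exists_adj_of_isChain hgap hdesc v ((hmem v).2 hne) hne
    omega
  even_iff v := even_iff_of_isChain hzero hgap v (mem_cons_zero hmem v)
  exists_adj v hv := exists_adj_of_isChain hgap hdesc v ((hmem v).2 hv) hv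

theorem IsLayering.isLayerWord_of_isChain (hb : F.IsLayering b) (hmem : ∀ v, v ∈ l ↔ v ≠ 0)
    (hgap : (0 :: l).IsChain fun u v => b v = b u + F.layerGap u v)
    (hdesc : (0 :: l).IsChain F.DescentStep) : IsLayerWord b l := by
  have hchain : (0 :: l).IsChain (LayerLT b) := by
    refine (isChain_and_iff.2 ⟨hgap, hdesc⟩).imp fun u v ⟨hbv, huv⟩ => ?_
    unfold layerGap at hbv
    split_ifs at hbv
    · exact (hb.layerLT_iff_descentStep hbv.symm).2 huv
    · exact Or.inl (by omega)
  exact ⟨hmem, hchain.pairwise.of_cons⟩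

theorem exists_isLayering_of_isChain (hnd : l.Nodup) (hmem : ∀ v, v ∈ l ↔ v ≠ 0)
    (hdesc : (0 :: l).IsChain F.DescentStep) : ∃ b, F.IsLayering b ∧ IsLayerWord b l := by
  obtain ⟨b, hzero, hgap⟩ := exists_isChain_eq_add F.layerGap 0 (nodup_cons_zero hnd hmem)
  have hb := isLayering_of_isChain hmem hzero hgap hdesc
  exact ⟨b, hb, hb.isLayerWord_of_isChain hmem hgap hdesc⟩

theorem IsLayering.unique {b' : Fin (n + 1) → ℕ} (hb : F.IsLayering b) (hb' : F.IsLayering b')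
    (hl : IsLayerWord b l) (hl' : IsLayerWord b' l) : b = b' := by
  funext v
  refine eq_of_isChain_eq_add (hb.isChain_of_isLayerWord hl).1 (hb'.isChain_of_isLayerWord hl').1
    ?_ v (mem_cons_zero hl.mem_iff v)
  rw [(hb.eq_zero_iff 0).2 rfl, (hb'.eq_zero_iff 0).2 rfl]

theorem IsLayering.zeta_rankConfig (hb : F.IsLayering b) (hl : IsLayerWord b l) :
    F.zeta (F.rankConfig b) = l := by
  have hword := hb.recMin_rankConfig.1.isLayerWord_zeta
  rw [hb.bIdx_rankConfig] at hword
  exact hword.unique hl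

end LayerWord

end Ferrers

/-- The map `ζ` is a bijection from the minimal recurrent
configurations on `G(F)` onto the permutations of `{1, …, n}` whose set of descent
bottoms is exactly `rows(F) \ {0}`. -/
theorem zeta_bijection {n : ℕ} (F : Ferrers n) :
    Set.BijOn (F.zeta) {c | F.RecMin c}
      {l : List (Fin (n + 1)) | l.Nodup ∧ l.length = n ∧ (∀ v, v ∈ l ↔ v ≠ 0) ∧
        descentBottoms l = {v : Fin (n + 1) | v ∈ F.rows ∧ v ≠ 0}} := by
  refine ⟨fun c (hc : F.RecMin c) => ?_, fun c (hc : F.RecMin c) c' (hc' : F.RecMin c') heq => ?_,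
    fun l ⟨hnd, _, hmem, hdesc⟩ => ?_⟩
  · have hword := hc.1.isLayerWord_zeta
    refine ⟨hword.nodup, hword.length_eq, hword.mem_iff, ?_⟩
    exact (Ferrers.descentBottoms_eq_rows_iff hword.nodup hword.mem_iff).2
      (hc.1.isLayering_bIdx.isChain_of_isLayerWord hword).2
  · have hbIdx : F.bIdx c = F.bIdx c' :=
      hc.1.isLayering_bIdx.unique hc'.1.isLayering_bIdx hc.1.isLayerWord_zeta
        (heq ▸ hc'.1.isLayerWord_zeta)
    rw [hc.eq_rankConfig_bIdx, hbIdx, ← hc'.eq_rankConfig_bIdx]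
  · have hchain := (Ferrers.descentBottoms_eq_rows_iff hnd hmem).1 hdesc
    obtain ⟨b, hb, hword⟩ := Ferrers.exists_isLayering_of_isChain hnd hmem hchain
    exact ⟨F.rankConfig b, hb.recMin_rankConfig, hb.zeta_rankConfig hword⟩
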